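/- arXiv:2010.13165 — 2 statements merged into one kernel-verified Lean document; each statement's English description precedes it below -/
import Mathlib

section
/- Let p be a positive integer and let x, y ∈ ℝᵖ be unit vectors. Let γ be the standard Gaussian measure on ℝᵖ (the p-fold product of the standard normal distribution N(0,1)). Then γ({w ∈ ℝᵖ : ⟨w, x⟩ ≥ 0 and ⟨w, y⟩ ≥ 0}) = 1/2 − arccos(⟨x, y⟩)/(2π); consequently ∫ ⟨x,y⟩·𝟙{⟨w,x⟩ ≥ 0}·𝟙{⟨w,y⟩ ≥ 0} dγ(w) = (1/2 − arccos(⟨x, y⟩)/(2π))·⟨x, y⟩. -/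
open Real MeasureTheory ProbabilityTheory
open InnerProductGeometry
open scoped InnerProductSpace

/-!
The law of `(⟪x, w⟫, ⟪y, w⟫)` under a standard Gaussian `w` depends only on the Gram matrix of `x`
and `y`, so these vectors may be replaced by `‖x‖` and `‖y‖ e^{iθ}` in `ℂ`, where `θ` is the angle
between them. The standard Gaussian on `ℂ` is rotation invariant, so averaging over all rotations
shows that it gives a cone the fraction of the unit circle which the cone cuts out. For the wedge
`{0 ≤ Re z, 0 ≤ Re (e^{-iθ} z)}` this is an arc of length `π - θ` out of `2π`.
-/

lemma integral_const_mul_indicator_mul_indicator {α : Type*} [MeasurableSpace α] {μ : Measure α}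
    {s t : Set α} (hs : MeasurableSet s) (ht : MeasurableSet t) (c : ℝ) :
    ∫ a, c * s.indicator (fun _ ↦ (1 : ℝ)) a * t.indicator (fun _ ↦ (1 : ℝ)) a ∂μ =
      μ.real (s ∩ t) * c := by
  rw [← smul_eq_mul, ← integral_indicator_const c (hs.inter ht)]
  congr with a
  by_cases has : a ∈ s <;> by_cases hat : a ∈ t <;> simp [has, hat]

lemma measure_mul_measure_univ_eq_lintegral_of_measurePreserving {α β γ : Type*} [MeasurableSpace α]
    [MeasurableSpace β] [MeasurableSpace γ] {ν : Measure α} {μ : Measure β} {κ : Measure γ}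
    [SFinite ν] [SFinite μ] {T : α → β → γ} (hT : Measurable (Function.uncurry T))
    (hTμ : ∀ a, MeasurePreserving (T a) μ κ) {s : Set γ} (hs : MeasurableSet s) :
    κ s * ν .univ = ∫⁻ b, ν {a | T a b ∈ s} ∂μ :=
  calc κ s * ν .univ = ∫⁻ a, μ (T a ⁻¹' s) ∂ν := by
        simp_rw [fun a ↦ (hTμ a).measure_preimage hs.nullMeasurableSet, lintegral_const]
    _ = (ν.prod μ) (Function.uncurry T ⁻¹' s) := (Measure.prod_apply (hT hs)).symm
    _ = ∫⁻ b, ν {a | T a b ∈ s} ∂μ := Measure.prod_apply_symm (hT hs)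

section Rotation

variable {T : ℝ} [hT : Fact (0 < T)] {A : Set ℂ}

lemma volume_toCircle_mul_mem_of_cone (hA : ∀ r : ℝ, 0 < r → ∀ z, r • z ∈ A ↔ z ∈ A) {z : ℂ}
    (hz : z ≠ 0) :
    volume {φ : AddCircle T | φ.toCircle * z ∈ A} = volume {φ : AddCircle T | ↑φ.toCircle ∈ A} := by
  obtain ⟨ψ, hψ⟩ := (AddCircle.homeomorphCircle hT.out.ne').surjective (Circle.exp z.arg)
  have hz_polar : z = ‖z‖ • (ψ.toCircle : ℂ) := by
    rw [← AddCircle.homeomorphCircle_apply hT.out.ne', hψ, Circle.coe_exp, Complex.real_smul,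
      Complex.norm_mul_exp_arg_mul_I]
  have h_shift : {φ : AddCircle T | φ.toCircle * z ∈ A} =
      (· + ψ) ⁻¹' {φ : AddCircle T | ↑φ.toCircle ∈ A} := by
    ext φ
    rw [Set.mem_ofPred_eq, hz_polar, mul_smul_comm, hA _ (norm_pos_iff.mpr hz)]
    simp [AddCircle.toCircle_add]
  rw [h_shift, measure_preimage_add_right]

theorem measure_cone_mul_eq_volume_toCircle_mem_mul {μ : Measure ℂ} [SFinite μ]
    (hμ : ∀ c : Circle, MeasurePreserving (rotation c) μ μ) (hμ₀ : μ {0} = 0)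
    (hAm : MeasurableSet A) (hA : ∀ r : ℝ, 0 < r → ∀ z, r • z ∈ A ↔ z ∈ A) :
    μ A * ENNReal.ofReal T = volume {φ : AddCircle T | ↑φ.toCircle ∈ A} * μ .univ := by
  have h_meas : Measurable (Function.uncurry fun (φ : AddCircle T) z ↦ rotation φ.toCircle z) := by
    have := AddCircle.continuous_toCircle (T := T)
    simp only [rotation_apply]
    exact Continuous.measurable (by fun_prop)
  have h_ne : ∀ᵐ z ∂μ, z ≠ 0 := measure_eq_zero_iff_ae_notMem.mp hμ₀
  rw [← AddCircle.measure_univ T, measure_mul_measure_univ_eq_lintegral_of_measurePreserving h_meas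
    (fun φ ↦ hμ φ.toCircle) hAm]
  simp_rw [rotation_apply]
  rw [lintegral_congr_ae (h_ne.mono fun z hz ↦ volume_toCircle_mul_mem_of_cone hA hz)]
  simp

end Rotation

lemma norm_sum_smul_eq_of_gram_eq {E F ι : Type*} [NormedAddCommGroup E] [InnerProductSpace ℝ E]
    [NormedAddCommGroup F] [InnerProductSpace ℝ F] [Fintype ι] {v : ι → E} {w : ι → F}
    (h : Matrix.gram ℝ v = Matrix.gram ℝ w) (c : ι → ℝ) :
    ‖∑ i, c i • v i‖ = ‖∑ i, c i • w i‖ := by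
  rw [norm_eq_sqrt_real_inner, norm_eq_sqrt_real_inner, ← Matrix.star_dotProduct_gram_mulVec, h,
    Matrix.star_dotProduct_gram_mulVec]

section StdGaussian

variable {E F ι : Type*} [NormedAddCommGroup E] [InnerProductSpace ℝ E] [FiniteDimensional ℝ E]
  [MeasurableSpace E] [BorelSpace E] [NormedAddCommGroup F] [InnerProductSpace ℝ F]
  [FiniteDimensional ℝ F] [MeasurableSpace F] [BorelSpace F]

lemma stdGaussian_singleton [Nontrivial E] (z : E) : stdGaussian E {z} = 0 := by
  obtain ⟨L, hL⟩ := exists_ne (0 : StrongDual ℝ E)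
  have h_ne_dirac : ∀ a, stdGaussian E ≠ .dirac a := fun a ha ↦ by
    have h_var := variance_dual_stdGaussian L
    rw [ha, variance_dirac] at h_var
    exact hL (by simpa using h_var.symm)
  exact (IsGaussian.nullSingletonClass h_ne_dirac).measure_singleton z

lemma charFunDual_map_inner_stdGaussian [Fintype ι] [DecidableEq ι] (v : ι → E)
    (L : StrongDual ℝ (ι → ℝ)) :
    charFunDual ((stdGaussian E).map fun z i ↦ ⟪v i, z⟫_ℝ) L =
      Complex.exp (-‖∑ i, L (Pi.single i 1) • v i‖ ^ 2 / 2) := by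
  have h_comp : L ∘L .pi (fun i ↦ innerSL ℝ (v i)) =
      innerSL ℝ (∑ i, L (Pi.single i 1) • v i) := by
    ext z
    simp [pi_eq_sum_univ' (fun i ↦ ⟪v i, z⟫_ℝ), mul_comm]
  rw [← innerSL_apply_norm (𝕜 := ℝ), ← h_comp, ← charFunDual_stdGaussian, ← charFunDual_map]
  rfl

variable [Finite ι] {v : ι → E} {w : ι → F}

theorem map_inner_stdGaussian_eq_of_gram_eq (h : Matrix.gram ℝ v = Matrix.gram ℝ w) :
    (stdGaussian E).map (fun z i ↦ ⟪v i, z⟫_ℝ) = (stdGaussian F).map (fun z i ↦ ⟪w i, z⟫_ℝ) := by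
  classical
  cases nonempty_fintype ι
  have := Measure.isProbabilityMeasure_map (μ := stdGaussian E)
    (f := fun z i ↦ ⟪v i, z⟫_ℝ) (by fun_prop)
  have := Measure.isProbabilityMeasure_map (μ := stdGaussian F)
    (f := fun z i ↦ ⟪w i, z⟫_ℝ) (by fun_prop)
  refine Measure.ext_of_charFunDual (funext fun L ↦ ?_)
  simp_rw [charFunDual_map_inner_stdGaussian, norm_sum_smul_eq_of_gram_eq h]

theorem stdGaussian_forall_inner_nonneg_eq_of_gram_eq (h : Matrix.gram ℝ v = Matrix.gram ℝ w) :
    stdGaussian E {z | ∀ i, 0 ≤ ⟪v i, z⟫_ℝ} = stdGaussian F {z | ∀ i, 0 ≤ ⟪w i, z⟫_ℝ} := by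
  have h_law := DFunLike.congr_fun (map_inner_stdGaussian_eq_of_gram_eq h) (Set.Ici 0)
  rwa [Measure.map_apply (by fun_prop) measurableSet_Ici,
    Measure.map_apply (by fun_prop) measurableSet_Ici] at h_law

end StdGaussian

lemma real_inner_circleExp_circleExp (θ φ : ℝ) :
    ⟪(Circle.exp θ : ℂ), Circle.exp φ⟫_ℝ = cos (φ - θ) := by
  simp [Complex.inner, Circle.coe_exp, ← Complex.exp_conj, cos_sub, Complex.exp_re,
    Complex.exp_im]

lemma setOf_cos_nonneg_inter_Ioc_subset {θ : ℝ} (hθ : θ ≤ π) :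
    {φ | 0 ≤ cos φ ∧ 0 ≤ cos (φ - θ)} ∩ Set.Ioc (-π) π ⊆
      Set.Icc (θ - π / 2) (π / 2) ∪ {-(π / 2)} := by
  rintro φ ⟨⟨hφ, hφθ⟩, hφ_gt, hφ_le⟩
  have h_abs : |φ| ≤ π / 2 := by
    by_contra! h
    rw [← cos_abs] at hφ
    exact (cos_neg_of_pi_div_two_lt_of_lt h (by grind)).not_ge hφ
  obtain ⟨h_ge, h_le⟩ := abs_le.mp h_abs
  rcases h_ge.eq_or_lt with h_eq | h_gt
  · exact .inr h_eq.symm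
  · refine .inl ⟨?_, h_le⟩
    by_contra! h
    rw [← cos_neg] at hφθ
    exact (cos_neg_of_pi_div_two_lt_of_lt (by linarith) (by linarith)).not_ge hφθ

lemma Ioo_subset_setOf_cos_nonneg_inter_Ioc {θ : ℝ} (hθ : 0 ≤ θ) :
    Set.Ioo (θ - π / 2) (π / 2) ⊆ {φ | 0 ≤ cos φ ∧ 0 ≤ cos (φ - θ)} ∩ Set.Ioc (-π) π := by
  rintro φ ⟨h_gt, h_lt⟩
  have := pi_pos
  exact ⟨⟨cos_nonneg_of_mem_Icc ⟨by linarith, by linarith⟩,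
    cos_nonneg_of_mem_Icc ⟨by linarith, by linarith⟩⟩, by linarith, by linarith⟩

lemma volume_setOf_cos_nonneg_inter_Ioc {θ : ℝ} (hθ₀ : 0 ≤ θ) (hθπ : θ ≤ π) :
    volume ({φ | 0 ≤ cos φ ∧ 0 ≤ cos (φ - θ)} ∩ Set.Ioc (-π) π) = ENNReal.ofReal (π - θ) := by
  have h_length : π / 2 - (θ - π / 2) = π - θ := by ring
  apply le_antisymm
  · calc _ ≤ volume (Set.Icc (θ - π / 2) (π / 2) ∪ {-(π / 2)}) :=
          measure_mono (setOf_cos_nonneg_inter_Ioc_subset hθπ)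
      _ ≤ volume (Set.Icc (θ - π / 2) (π / 2)) + volume {-(π / 2)} := measure_union_le _ _
      _ = ENNReal.ofReal (π - θ) := by
          rw [Real.volume_Icc, measure_singleton, add_zero, h_length]
  · rw [← h_length, ← Real.volume_Ioo]
    exact measure_mono (Ioo_subset_setOf_cos_nonneg_inter_Ioc hθ₀)

lemma measurableSet_setOf_inner_nonneg {E : Type*} [NormedAddCommGroup E] [InnerProductSpace ℝ E]
    [MeasurableSpace E] [OpensMeasurableSpace E] (x : E) : MeasurableSet {w | 0 ≤ ⟪x, w⟫_ℝ} :=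
  (isClosed_le (by fun_prop) (by fun_prop)).measurableSet

lemma volume_toCircle_mem_wedge [Fact (0 < 2 * π)] {θ : ℝ} (hθ₀ : 0 ≤ θ) (hθπ : θ ≤ π) :
    volume {φ : AddCircle (2 * π) |
      0 ≤ ⟪1, (φ.toCircle : ℂ)⟫_ℝ ∧ 0 ≤ ⟪(Circle.exp θ : ℂ), φ.toCircle⟫_ℝ} =
      ENNReal.ofReal (π - θ) := by
  have h_meas : MeasurableSet {φ : AddCircle (2 * π) |
      0 ≤ ⟪1, (φ.toCircle : ℂ)⟫_ℝ ∧ 0 ≤ ⟪(Circle.exp θ : ℂ), φ.toCircle⟫_ℝ} :=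
    (by fun_prop : Measurable fun φ : AddCircle (2 * π) ↦ (φ.toCircle : ℂ))
      ((measurableSet_setOf_inner_nonneg 1).inter (measurableSet_setOf_inner_nonneg _))
  have h_period : -π + 2 * π = π := by ring
  rw [AddCircle.add_projection_respects_measure _ (-π) h_meas, h_period,
    ← volume_setOf_cos_nonneg_inter_Ioc hθ₀ hθπ]
  congr with φ
  simp [AddCircle.toCircle_apply_mk, ← real_inner_circleExp_circleExp]

theorem stdGaussian_complex_wedge {θ : ℝ} (hθ₀ : 0 ≤ θ) (hθπ : θ ≤ π) :
    stdGaussian ℂ {z | 0 ≤ ⟪1, z⟫_ℝ ∧ 0 ≤ ⟪(Circle.exp θ : ℂ), z⟫_ℝ} =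
      ENNReal.ofReal (1 / 2 - θ / (2 * π)) := by
  have : Fact (0 < 2 * π) := ⟨two_pi_pos⟩
  have h_meas : MeasurableSet {z : ℂ | 0 ≤ ⟪1, z⟫_ℝ ∧ 0 ≤ ⟪(Circle.exp θ : ℂ), z⟫_ℝ} :=
    (measurableSet_setOf_inner_nonneg 1).inter (measurableSet_setOf_inner_nonneg _)
  have h_rotation (c : Circle) :
      MeasurePreserving (rotation c) (stdGaussian ℂ) (stdGaussian ℂ) :=
    ⟨by fun_prop, stdGaussian_map (rotation c)⟩
  have h_arc := measure_cone_mul_eq_volume_toCircle_mem_mul (T := 2 * π) h_rotation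
    (stdGaussian_singleton 0) h_meas fun r hr z ↦ by
      simp only [Set.mem_ofPred_eq, inner_smul_right, mul_nonneg_iff_of_pos_left hr]
  simp only [Set.mem_ofPred_eq, volume_toCircle_mem_wedge hθ₀ hθπ, measure_univ, mul_one] at h_arc
  have h_ratio : 1 / 2 - θ / (2 * π) = (π - θ) / (2 * π) := by field_simp
  rw [h_ratio, ENNReal.ofReal_div_of_pos two_pi_pos, ENNReal.eq_div_iff (by simp [pi_pos])
    ENNReal.ofReal_ne_top, mul_comm, h_arc]

section InnerProductSpace

variable {E : Type*} [NormedAddCommGroup E] [InnerProductSpace ℝ E]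

lemma gram_pair_eq_gram_circleExp_angle (x y : E) :
    Matrix.gram ℝ ![x, y] =
      Matrix.gram ℝ ![‖x‖ • 1, ‖y‖ • (Circle.exp (angle x y) : ℂ)] := by
  have h_cos : ⟪1, (Circle.exp (angle x y) : ℂ)⟫_ℝ = cos (angle x y) := by
    simp
  have h_inner : ⟪x, y⟫_ℝ = ⟪‖x‖ • (1 : ℂ), ‖y‖ • (Circle.exp (angle x y) : ℂ)⟫_ℝ := by
    rw [inner_smul_left, inner_smul_right, h_cos, ← cos_angle_mul_norm_mul_norm, conj_trivial]
    ring
  ext i j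
  fin_cases i <;> fin_cases j
  · simp [Matrix.gram_apply, norm_smul, -Complex.real_smul]
  · exact h_inner
  · exact (real_inner_comm _ _).trans (h_inner.trans (real_inner_comm _ _))
  · simp [Matrix.gram_apply, norm_smul, -Complex.real_smul]

variable [FiniteDimensional ℝ E] [MeasurableSpace E] [BorelSpace E]

theorem stdGaussian_inner_nonneg_and_inner_nonneg {x y : E} (hx : x ≠ 0) (hy : y ≠ 0) :
    stdGaussian E {w | 0 ≤ ⟪x, w⟫_ℝ ∧ 0 ≤ ⟪y, w⟫_ℝ} =
      ENNReal.ofReal (1 / 2 - angle x y / (2 * π)) := by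
  have h_plane := stdGaussian_forall_inner_nonneg_eq_of_gram_eq
    (gram_pair_eq_gram_circleExp_angle x y)
  simp only [Fin.forall_fin_two, Matrix.cons_val_zero, Matrix.cons_val_one, inner_smul_left,
    conj_trivial, mul_nonneg_iff_of_pos_left (norm_pos_iff.mpr hx),
    mul_nonneg_iff_of_pos_left (norm_pos_iff.mpr hy)] at h_plane
  rw [h_plane, stdGaussian_complex_wedge (angle_nonneg x y) (angle_le_pi x y)]

theorem gaussian_orthant_arccos_general {x y : E} (hx : x ≠ 0) (hy : y ≠ 0) :
    stdGaussian E {w | 0 ≤ ⟪x, w⟫_ℝ ∧ 0 ≤ ⟪y, w⟫_ℝ} =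
      ENNReal.ofReal (1 / 2 - angle x y / (2 * π)) ∧
    ∫ w, ⟪x, y⟫_ℝ * {w | 0 ≤ ⟪x, w⟫_ℝ}.indicator (fun _ ↦ (1 : ℝ)) w *
        {w | 0 ≤ ⟪y, w⟫_ℝ}.indicator (fun _ ↦ (1 : ℝ)) w ∂stdGaussian E =
      (1 / 2 - angle x y / (2 * π)) * ⟪x, y⟫_ℝ := by
  have h_measure := stdGaussian_inner_nonneg_and_inner_nonneg hx hy
  refine ⟨h_measure, ?_⟩
  have h_nonneg : 0 ≤ 1 / 2 - angle x y / (2 * π) := by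
    have := angle_le_pi x y
    rw [sub_nonneg, div_le_div_iff₀ two_pi_pos two_pos]
    linarith
  rw [integral_const_mul_indicator_mul_indicator (measurableSet_setOf_inner_nonneg x)
    (measurableSet_setOf_inner_nonneg y), ← Set.ofPred_and, measureReal_def, h_measure,
    ENNReal.toReal_ofReal h_nonneg]

end InnerProductSpace

section EuclideanSpace

variable {ι : Type*} [Fintype ι] {u v : ι → ℝ}

lemma measurePreserving_toLp_stdGaussian :
    MeasurePreserving (MeasurableEquiv.toLp 2 (ι → ℝ)) (.pi fun _ ↦ gaussianReal 0 1)
      (stdGaussian (EuclideanSpace ℝ ι)) :=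
  ⟨by fun_prop, map_pi_eq_stdGaussian⟩

lemma norm_toLp_eq_one_of_sum_sq_eq_one (hu : ∑ i, u i ^ 2 = 1) : ‖WithLp.toLp 2 u‖ = 1 := by
  simp [EuclideanSpace.norm_eq, hu]

lemma toLp_ne_zero_of_sum_sq_eq_one (hu : ∑ i, u i ^ 2 = 1) : WithLp.toLp 2 u ≠ 0 :=
  norm_ne_zero_iff.mp (by simp [norm_toLp_eq_one_of_sum_sq_eq_one hu])

lemma real_inner_toLp (u v : ι → ℝ) : ⟪WithLp.toLp 2 u, WithLp.toLp 2 v⟫_ℝ = ∑ i, u i * v i :=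
  real_inner_comm _ _

lemma angle_toLp_of_sum_sq_eq_one (hu : ∑ i, u i ^ 2 = 1) (hv : ∑ i, v i ^ 2 = 1) :
    angle (WithLp.toLp 2 u) (WithLp.toLp 2 v) = arccos (∑ i, u i * v i) := by
  rw [angle, norm_toLp_eq_one_of_sum_sq_eq_one hu, norm_toLp_eq_one_of_sum_sq_eq_one hv,
    real_inner_toLp, mul_one, div_one]

end EuclideanSpace

/-- The arc-cosine kernel formula: for unit vectors `x, y ∈ ℝᵖ` and `w` standard
Gaussian, `P(⟨w,x⟩ ≥ 0 ∧ ⟨w,y⟩ ≥ 0) = 1/2 - arccos(⟨x,y⟩)/(2π)`; consequently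
`E[⟨x,y⟩ 𝟙{⟨w,x⟩ ≥ 0} 𝟙{⟨w,y⟩ ≥ 0}] = (1/2 - arccos(⟨x,y⟩)/(2π)) ⟨x,y⟩`. -/
theorem gaussian_orthant_arccos
    (p : ℕ) (hp : 0 < p) (x y : Fin p → ℝ)
    (hx : ∑ i, (x i) ^ 2 = 1) (hy : ∑ i, (y i) ^ 2 = 1) :
    (MeasureTheory.Measure.pi fun _ : Fin p => gaussianReal 0 1)
        {w : Fin p → ℝ | 0 ≤ ∑ i, w i * x i ∧ 0 ≤ ∑ i, w i * y i}
      = ENNReal.ofReal (1 / 2 - Real.arccos (∑ i, x i * y i) / (2 * Real.pi)) ∧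
    ∫ w : Fin p → ℝ,
        (∑ i, x i * y i) *
          Set.indicator {w : Fin p → ℝ | 0 ≤ ∑ i, w i * x i} (fun _ => (1 : ℝ)) w *
          Set.indicator {w : Fin p → ℝ | 0 ≤ ∑ i, w i * y i} (fun _ => (1 : ℝ)) w
        ∂(MeasureTheory.Measure.pi fun _ : Fin p => gaussianReal 0 1)
      = (1 / 2 - Real.arccos (∑ i, x i * y i) / (2 * Real.pi)) * (∑ i, x i * y i) := by
  have h := gaussian_orthant_arccos_general (toLp_ne_zero_of_sum_sq_eq_one hx)
    (toLp_ne_zero_of_sum_sq_eq_one hy)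
  rwa [angle_toLp_of_sum_sq_eq_one hx hy, real_inner_toLp x y,
    ← measurePreserving_toLp_stdGaussian.measure_preimage_equiv,
    ← measurePreserving_toLp_stdGaussian.integral_comp'] at h
end

section
/- Let p and n be positive integers and let x₁, …, x_n ∈ ℝᵖ be unit vectors such that for all i ≠ j, x_i is not parallel to x_j (i.e., x_i ≠ x_j and x_i ≠ −x_j). Then the real n×n matrix H^∞ with entries H^∞_{ij} = (1/2 − arccos(⟨x_i, x_j⟩)/(2π))·⟨x_i, x_j⟩ is positive definite; in particular its smallest eigenvalue λ₀ is strictly positive. -/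
open Matrix Real

/-!
Since `arccos t = π / 2 - arcsin t`, the matrix is `G / 4 + (G ∘ arcsin G) / (2π)`, where `G` is the
Gram matrix of the inputs and functions and products act entrywise. The Maclaurin series of
`t * arcsin t` has positive coefficients on infinitely many powers of `t`. Every entrywise power of
`G` is positive semidefinite by the Schur product theorem, and these powers tend to the identity,
because `G` has unit diagonal and its other entries lie in `(-1, 1)`. Hence, for `v ≠ 0`, the
quadratic form of `G ∘ arcsin G` at `v` is a series of nonnegative terms, with a positive term in
every sufficiently high degree.
-/

open Filter Topology
open scoped InnerProductSpace Nat

section ArcsinSeries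

lemma ascPochhammer_eval_one_half {K : Type*} [Field K] [CharZero K] (n : ℕ) :
    (ascPochhammer K n).eval (1 / 2) = n ! * (n.centralBinom / 4 ^ n) := by
  induction n with
  | zero => simp
  | succ n ih =>
    have hrec : ((n : K) + 1) * (n + 1).centralBinom = 2 * (2 * n + 1) * n.centralBinom :=
      mod_cast n.succ_mul_centralBinom_succ
    rw [ascPochhammer_succ_eval, ih, Nat.factorial_succ]
    push_cast
    field_simp
    linear_combination -2 * n ! * 4 ^ n * hrec

lemma ring_choose_one_half_add_sub_one {K : Type*} [Field K] [CharZero K] (n : ℕ) :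
    Ring.choose (1 / 2 + n - 1 : K) n = n.centralBinom / 4 ^ n := by
  have hfactorial : (n ! : K) ≠ 0 := mod_cast n.factorial_ne_zero
  apply mul_left_cancel₀ hfactorial
  rw [← ascPochhammer_eval_one_half, ← Ring.multichoose_eq, ← nsmul_eq_mul,
    Ring.factorial_nsmul_multichoose_eq_ascPochhammer, Polynomial.ascPochhammer_smeval_eq_eval]

lemma hasSum_centralBinom_div_four_pow_mul_pow {u : ℝ} (hu : |u| < 1) :
    HasSum (fun n : ℕ => n.centralBinom / 4 ^ n * u ^ n) (1 / √(1 - u)) := by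
  have h := (one_div_one_sub_rpow_hasFPowerSeriesOnBall_zero (1 / 2)).hasSum (y := u)
    (by simpa [enorm_eq_nnnorm, ← NNReal.coe_lt_coe] using hu)
  simpa only [FormalMultilinearSeries.ofScalars_apply_eq, ring_choose_one_half_add_sub_one,
    smul_eq_mul, zero_add, ← sqrt_eq_rpow] using h

lemma hasSum_centralBinom_div_four_pow_mul_sq_pow {t : ℝ} (ht : |t| < 1) :
    HasSum (fun n : ℕ => n.centralBinom / 4 ^ n * (t ^ 2) ^ n) (1 / √(1 - t ^ 2)) :=
  hasSum_centralBinom_div_four_pow_mul_pow <| by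
    simpa only [abs_pow] using pow_lt_one₀ (abs_nonneg t) ht two_ne_zero

/-- The coefficient of `t ^ (2 * n + 1)` in the Maclaurin series of `arcsin t`. -/
noncomputable def arcsinCoeff (n : ℕ) : ℝ := n.centralBinom / 4 ^ n / (2 * n + 1)

lemma arcsinCoeff_pos (n : ℕ) : 0 < arcsinCoeff n := by
  have := n.centralBinom_pos
  unfold arcsinCoeff
  positivity

lemma hasDerivAt_arcsinCoeff_mul_pow (n : ℕ) (t : ℝ) :
    HasDerivAt (fun s => arcsinCoeff n * s ^ (2 * n + 1))
      (n.centralBinom / 4 ^ n * (t ^ 2) ^ n) t := by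
  have hcoeff : arcsinCoeff n * ((2 * n + 1 : ℕ) * t ^ (2 * n)) =
      n.centralBinom / 4 ^ n * (t ^ 2) ^ n := by
    rw [arcsinCoeff, pow_mul]
    push_cast
    field_simp
  exact hcoeff ▸ (hasDerivAt_pow (2 * n + 1) t).const_mul (arcsinCoeff n)

lemma summable_arcsinCoeff_mul_pow {t : ℝ} (ht : |t| < 1) :
    Summable fun n => arcsinCoeff n * t ^ (2 * n + 1) := by
  refine (hasSum_centralBinom_div_four_pow_mul_sq_pow ht).summable.of_norm_bounded fun n => ?_
  have hcoeff : arcsinCoeff n ≤ n.centralBinom / 4 ^ n :=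
    div_le_self (by positivity) (by linarith [n.cast_nonneg (α := ℝ)])
  have hpow : ‖t ^ (2 * n + 1)‖ ≤ (t ^ 2) ^ n := by
    rw [norm_pow, norm_eq_abs, ← sq_abs, ← pow_mul]
    exact pow_le_pow_of_le_one (abs_nonneg t) ht.le (Nat.le_succ _)
  rw [norm_mul, norm_of_nonneg (arcsinCoeff_pos n).le]
  gcongr

lemma hasDerivAt_tsum_arcsinCoeff_mul_pow {t : ℝ} (ht : |t| < 1) :
    HasDerivAt (fun s => ∑' n, arcsinCoeff n * s ^ (2 * n + 1)) (1 / √(1 - t ^ 2)) t := by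
  obtain ⟨r, htr, hr⟩ := exists_between ht
  have hr₀ : 0 < r := (abs_nonneg t).trans_lt htr
  have hbound_summable : Summable fun n : ℕ => (n.centralBinom / 4 ^ n * (r ^ 2) ^ n : ℝ) :=
    (hasSum_centralBinom_div_four_pow_mul_sq_pow (by rwa [abs_of_pos hr₀])).summable
  have hderiv_bound (n : ℕ) (s : ℝ) (hs : s ∈ Set.Ioo (-r) r) :
      ‖(n.centralBinom / 4 ^ n * (s ^ 2) ^ n : ℝ)‖ ≤ n.centralBinom / 4 ^ n * (r ^ 2) ^ n := by
    rw [norm_of_nonneg (by positivity)]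
    gcongr ?_ * ?_ ^ n
    exact (sq_lt_sq' hs.1 hs.2).le
  rw [← (hasSum_centralBinom_div_four_pow_mul_sq_pow ht).tsum_eq]
  exact hasDerivAt_tsum_of_isPreconnected hbound_summable isOpen_Ioo isPreconnected_Ioo
    (fun n s _ => hasDerivAt_arcsinCoeff_mul_pow n s) hderiv_bound (abs_lt.1 htr)
    (summable_arcsinCoeff_mul_pow ht) (abs_lt.1 htr)

lemma hasSum_arcsin_of_abs_lt_one {t : ℝ} (ht : |t| < 1) :
    HasSum (fun n => arcsinCoeff n * t ^ (2 * n + 1)) (arcsin t) := by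
  have hderiv_tsum (s : ℝ) (hs : s ∈ Set.Ioo (-1) 1) :=
    hasDerivAt_tsum_arcsinCoeff_mul_pow (abs_lt.2 hs)
  have hderiv_arcsin (s : ℝ) (hs : s ∈ Set.Ioo (-1) 1) : HasDerivAt arcsin (1 / √(1 - s ^ 2)) s :=
    hasDerivAt_arcsin hs.1.ne' hs.2.ne
  have htsum_eq : Set.EqOn (fun s => ∑' n, arcsinCoeff n * s ^ (2 * n + 1)) arcsin
      (Set.Ioo (-1) 1) :=
    isOpen_Ioo.eqOn_of_deriv_eq isPreconnected_Ioo
      (fun s hs => (hderiv_tsum s hs).differentiableAt.differentiableWithinAt)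
      (fun s hs => (hderiv_arcsin s hs).differentiableAt.differentiableWithinAt)
      (fun s hs => (hderiv_tsum s hs).deriv.trans (hderiv_arcsin s hs).deriv.symm)
      (x := 0) (by simp) (by simp)
  exact htsum_eq (abs_lt.1 ht) ▸ (summable_arcsinCoeff_mul_pow ht).hasSum

lemma summable_arcsinCoeff : Summable arcsinCoeff := by
  refine summable_of_sum_range_le (c := π / 2) (fun n => (arcsinCoeff_pos n).le) fun N => ?_
  have hpartial : ∀ᶠ r : ℝ in 𝓝[<] 1,
      ∑ n ∈ Finset.range N, arcsinCoeff n * r ^ (2 * n + 1) ≤ π / 2 := by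
    filter_upwards [Ioo_mem_nhdsLT zero_lt_one] with r hr
    have hsum := hasSum_arcsin_of_abs_lt_one (t := r) (by rw [abs_of_pos hr.1]; exact hr.2)
    refine (sum_le_hasSum _ (fun n _ => ?_) hsum).trans (arcsin_le_pi_div_two r)
    exact mul_nonneg (arcsinCoeff_pos n).le (pow_nonneg hr.1.le _)
  have hcont : Continuous fun r : ℝ =>
      ∑ n ∈ Finset.range N, arcsinCoeff n * r ^ (2 * n + 1) := by
    fun_prop
  simpa only [one_pow, mul_one] using
    le_of_tendsto ((hcont.tendsto 1).mono_left nhdsWithin_le_nhds) hpartial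

lemma hasSum_arcsin {t : ℝ} (ht : |t| ≤ 1) :
    HasSum (fun n => arcsinCoeff n * t ^ (2 * n + 1)) (arcsin t) := by
  have hterm_bound (n : ℕ) (s : ℝ) (hs : s ∈ Set.Icc (-1 : ℝ) 1) :
      ‖arcsinCoeff n * s ^ (2 * n + 1)‖ ≤ arcsinCoeff n := by
    rw [norm_mul, norm_pow, norm_of_nonneg (arcsinCoeff_pos n).le]
    exact mul_le_of_le_one_right (arcsinCoeff_pos n).le
      (pow_le_one₀ (norm_nonneg s) (abs_le.2 hs))
  have hcont : ContinuousOn (fun s : ℝ => ∑' n, arcsinCoeff n * s ^ (2 * n + 1))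
      (Set.Icc (-1) 1) :=
    continuousOn_tsum (fun n => by fun_prop) summable_arcsinCoeff hterm_bound
  have heq : Set.EqOn (fun s : ℝ => ∑' n, arcsinCoeff n * s ^ (2 * n + 1)) arcsin
      (Set.Icc (-1) 1) :=
    Set.EqOn.of_subset_closure
      (fun s hs => (hasSum_arcsin_of_abs_lt_one (abs_lt.2 hs)).tsum_eq) hcont
      continuous_arcsin.continuousOn Set.Ioo_subset_Icc_self (closure_Ioo (by norm_num)).ge
  have hsummable := summable_arcsinCoeff.of_norm_bounded fun n => hterm_bound n t (abs_le.1 ht)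
  exact heq (abs_le.1 ht) ▸ hsummable.hasSum

lemma hasSum_mul_arcsin {t : ℝ} (ht : |t| ≤ 1) :
    HasSum (fun n => arcsinCoeff n * t ^ (2 * n + 2)) (t * arcsin t) := by
  simpa only [pow_succ', mul_left_comm] using (hasSum_arcsin ht).mul_left t

end ArcsinSeries

section EntrywisePowers

open scoped ComplexOrder

lemma posSemidef_gram_of_arbitrary_index {𝕜 E ι : Type*} [RCLike 𝕜] [NormedAddCommGroup E]
    [InnerProductSpace 𝕜 E] (x : ι → E) : (gram 𝕜 x).PosSemidef := by
  refine ⟨isHermitian_gram 𝕜 x, fun v => ?_⟩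
  have hform : (v.sum fun i a => v.sum fun j b => star a * gram 𝕜 x i j * b) =
      ⟪v.sum fun i a => a • x i, v.sum fun j b => b • x j⟫_𝕜 := by
    rw [Finsupp.sum_inner]
    simp only [Finsupp.inner_sum, inner_smul_left, inner_smul_right, gram_apply, RCLike.star_def,
      mul_comm]
  rw [hform, inner_self_eq_norm_sq_to_K]
  positivity

lemma posSemidef_map_pow {𝕜 ι : Type*} [RCLike 𝕜] {G : Matrix ι ι 𝕜} (hG : G.PosSemidef)
    (k : ℕ) : (G.map (· ^ k)).PosSemidef := by
  induction k with
  | zero =>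
    have hones : G.map (· ^ 0) = gram 𝕜 fun _ => (1 : 𝕜) := by ext; simp
    exact hones ▸ posSemidef_gram_of_arbitrary_index _
  | succ k ih =>
    have hschur : G.map (· ^ (k + 1)) = G.map (· ^ k) ⊙ G := by ext; simp [pow_succ]
    exact hschur ▸ ih.hadamard hG

variable {ι : Type*} {G : Matrix ι ι ℝ}

lemma tendsto_sum_sum_mul_pow_mul (hdiag : ∀ i, G i i = 1)
    (hoff : Pairwise fun i j => |G i j| < 1) (v : ι →₀ ℝ) :
    Tendsto (fun k : ℕ => v.sum fun i a => v.sum fun j b => a * G i j ^ k * b) atTop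
      (𝓝 (v.sum fun _ a => a ^ 2)) := by
  classical
  have hentry (i j : ι) : Tendsto (fun k : ℕ => G i j ^ k) atTop
      (𝓝 ((1 : Matrix ι ι ℝ) i j)) := by
    obtain rfl | hij := eq_or_ne i j
    · simp [hdiag]
    · simpa [one_apply_ne hij] using tendsto_pow_atTop_nhds_zero_of_abs_lt_one (hoff hij)
  have hlimit : (v.sum fun _ a => a ^ 2) =
      v.sum fun i a => v.sum fun j b => a * (1 : Matrix ι ι ℝ) i j * b := by
    refine Finsupp.sum_congr fun i _ => ?_
    simp [one_apply, sq]
  rw [hlimit]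
  exact tendsto_finsetSum _ fun i _ => tendsto_finsetSum _ fun j _ =>
    ((hentry i j).const_mul _).mul_const _

theorem posDef_of_hasSum_mul_pow {F : Matrix ι ι ℝ} {a : ℕ → ℝ} {e : ℕ → ℕ}
    (hG : G.PosSemidef) (hdiag : ∀ i, G i i = 1) (hoff : Pairwise fun i j => |G i j| < 1)
    (ha : ∀ k, 0 < a k) (he : Tendsto e atTop atTop)
    (hF : ∀ i j, HasSum (fun k => a k * G i j ^ e k) (F i j)) : F.PosDef := by
  have hsymm : F.IsHermitian := by
    ext i j
    have hGsymm : G j i = G i j := hG.isHermitian.apply i j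
    exact (hF j i).unique (hGsymm ▸ hF i j)
  refine ⟨hsymm, fun v hv => ?_⟩
  let powForm (k : ℕ) : ℝ := v.sum fun i b => v.sum fun j c => b * G i j ^ k * c
  have hpowForm_nonneg (k : ℕ) : 0 ≤ powForm k := (posSemidef_map_pow hG k).2 v
  have hnorm_pos : 0 < v.sum fun _ b => b ^ 2 :=
    Finsupp.sum_pos (fun i hi => by have := Finsupp.mem_support_iff.1 hi; positivity) hv
  obtain ⟨k, hk⟩ : ∃ k, 0 < powForm (e k) :=
    (((tendsto_sum_sum_mul_pow_mul hdiag hoff v).comp he).eventually_const_lt hnorm_pos).exists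
  have hform : HasSum (fun k => a k * powForm (e k))
      (v.sum fun i b => v.sum fun j c => star b * F i j * c) := by
    have hterm (k : ℕ) : a k * powForm (e k) =
        v.sum fun i b => v.sum fun j c => b * (a k * G i j ^ e k) * c := by
      simp only [powForm, Finsupp.sum, Finset.mul_sum]
      congr! 2
      ring
    simp only [hterm]
    exact hasSum_sum fun i _ => hasSum_sum fun j _ => ((hF i j).mul_left _).mul_right _
  calc
    0 < a k * powForm (e k) := mul_pos (ha k) hk
    _ ≤ _ := le_hasSum hform k fun m _ => mul_nonneg (ha m).le (hpowForm_nonneg (e m))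

lemma posDef_map_mul_arcsin (hG : G.PosSemidef) (hdiag : ∀ i, G i i = 1)
    (hoff : Pairwise fun i j => |G i j| < 1) : (G.map fun t => t * arcsin t).PosDef := by
  have hle (i j : ι) : |G i j| ≤ 1 := by
    obtain rfl | hij := eq_or_ne i j
    · simp [hdiag]
    · exact (hoff hij).le
  have hdegree : Tendsto (fun n : ℕ => 2 * n + 2) atTop atTop :=
    tendsto_atTop_mono (fun n => (by lia : n ≤ 2 * n + 2)) tendsto_id
  exact posDef_of_hasSum_mul_pow hG hdiag hoff arcsinCoeff_pos hdegree fun i j =>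
    hasSum_mul_arcsin (hle i j)

end EntrywisePowers

lemma abs_inner_lt_one_of_norm_eq_one {E : Type*} [NormedAddCommGroup E] [InnerProductSpace ℝ E]
    {x y : E} (hx : ‖x‖ = 1) (hy : ‖y‖ = 1) (hne : x ≠ y) (hne_neg : x ≠ -y) :
    |⟪x, y⟫_ℝ| < 1 := by
  have hinner_neg : ⟪x, -y⟫_ℝ < 1 :=
    (inner_lt_one_iff_real_of_norm_eq_one hx (by rwa [norm_neg])).2 hne_neg
  rw [inner_neg_right] at hinner_neg
  exact abs_lt.2 ⟨by linarith, (inner_lt_one_iff_real_of_norm_eq_one hx hy).2 hne⟩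

lemma real_inner_toLp_toLp {κ : Type*} [Fintype κ] (x y : κ → ℝ) :
    ⟪WithLp.toLp 2 x, WithLp.toLp 2 y⟫_ℝ = ∑ k, x k * y k := by
  rw [EuclideanSpace.inner_toLp_toLp, star_trivial, dotProduct_comm, dotProduct]

lemma eigenvalue_pos_of_posDef {R ι : Type*} [CommRing R] [LinearOrder R] [IsStrictOrderedRing R]
    [StarRing R] [StarOrderedRing R] [Fintype ι] {M : Matrix ι ι R} (hM : M.PosDef) {μ : R}
    {v : ι → R} (hv : v ≠ 0) (hμ : M *ᵥ v = μ • v) : 0 < μ := by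
  have hform : 0 < μ * (star v ⬝ᵥ v) := by
    simpa only [hμ, dotProduct_smul, smul_eq_mul] using hM.dotProduct_mulVec_pos hv
  exact pos_of_mul_pos_left hform (dotProduct_star_self_nonneg v)

lemma half_sub_arccos_div_two_pi_mul_self (t : ℝ) :
    (1 / 2 - arccos t / (2 * π)) * t = 1 / 4 * t + 1 / (2 * π) * (t * arcsin t) := by
  rw [arccos]
  field_simp
  ring

theorem limiting_ntk_pos_def_general {ι E : Type*} [NormedAddCommGroup E]
    [InnerProductSpace ℝ E] (x : ι → E) (hunit : ∀ i, ‖x i‖ = 1)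
    (hnonpar : ∀ i j, i ≠ j → x i ≠ x j ∧ x i ≠ -x j) :
    (Matrix.of fun i j => (1 / 2 - arccos ⟪x i, x j⟫_ℝ / (2 * π)) * ⟪x i, x j⟫_ℝ).PosDef := by
  have hgram : (gram ℝ x).PosSemidef := posSemidef_gram_of_arbitrary_index x
  have hdiag (i : ι) : gram ℝ x i i = 1 := by simp [hunit]
  have hoff : Pairwise fun i j => |gram ℝ x i j| < 1 := fun i j hij =>
    abs_inner_lt_one_of_norm_eq_one (hunit i) (hunit j) (hnonpar i j hij).1 (hnonpar i j hij).2
  have harcsin : ((1 / (2 * π)) • (gram ℝ x).map fun t => t * arcsin t).PosDef :=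
    (posDef_map_mul_arcsin hgram hdiag hoff).smul (by positivity)
  have hlinear : ((1 / 4 : ℝ) • gram ℝ x).PosSemidef := hgram.smul (by norm_num)
  convert harcsin.posSemidef_add hlinear using 1
  ext i j
  exact half_sub_arccos_div_two_pi_mul_self _

/-- Positive definiteness of the limiting NTK matrix
`H^∞_{ij} = (1/2 - arccos(⟨x_i, x_j⟩)/(2π)) ⟨x_i, x_j⟩` for pairwise
non-parallel unit inputs; in particular all its eigenvalues are strictly
positive. -/
theorem limiting_ntk_pos_def
    (q n : ℕ) (hq : 0 < q) (hn : 0 < n) (x : Fin n → (Fin q → ℝ))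
    (hunit : ∀ i, ∑ k, (x i k) ^ 2 = 1)
    (hnonpar : ∀ i j, i ≠ j → x i ≠ x j ∧ x i ≠ -x j) :
    (Matrix.of fun i j : Fin n =>
        (1 / 2 - Real.arccos (∑ k, x i k * x j k) / (2 * Real.pi)) *
          (∑ k, x i k * x j k)).PosDef ∧
    ∀ (μ : ℝ) (v : Fin n → ℝ), v ≠ 0 →
      (Matrix.of fun i j : Fin n =>
        (1 / 2 - Real.arccos (∑ k, x i k * x j k) / (2 * Real.pi)) *
          (∑ k, x i k * x j k)).mulVec v = μ • v → 0 < μ := by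
  have hpos := limiting_ntk_pos_def_general (fun i => WithLp.toLp 2 (x i))
    (fun i => by simp [EuclideanSpace.norm_eq, hunit])
    (fun i j hij => by simpa [← WithLp.toLp_neg] using hnonpar i j hij)
  simp only [real_inner_toLp_toLp] at hpos
  exact ⟨hpos, fun μ v hv hμ => eigenvalue_pos_of_posDef hpos hv hμ⟩
end
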